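/- (1D supersolution.) Let N = 1, Ω = (0,∞), s ∈ (1/2,1), and let L_Ω be either the operator L_Ω u(x) = PV ∫_0^∞ (u(x)−u(y)) K_Ω(x,y) dy with K_Ω(x,y) = c_{1,s}|x−y|^{−1−2s} + k_Ω(x,y), or the regional fractional Laplacian L_Ω u(x) = c_{1,s} PV ∫_0^∞ (u(x)−u(y))|x−y|^{−1−2s} dy. Fix r₀ > 0 and let η ∈ C_0^∞([0,2r₀)) satisfy 0 ≤ η ≤ 1 and η = 1 on [0,r₀]. Then the function φ̄(x) := η(x) x^{2s−1} satisfies L_Ω φ̄(x) ≥ c̄ for all x ∈ (0,r₀), for some constant c̄ > 0 depending only on s and r₀. Moreover, in the case of the kernel K_Ω = c_{1,s}|x−y|^{−1−2s} + k_Ω, the stronger bound L_Ω φ̄(x) ≥ c̄ (1 + log^−(x/r₀)) holds for all x ∈ (0,r₀). -/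

import Mathlib

open MeasureTheory Metric Set Filter Topology
open scoped ENNReal NNReal

noncomputable section

/-- The normalizing constant `c_{N,s}` of the fractional Laplacian. -/
def cNs (N : ℕ) (s : ℝ) : ℝ :=
  (2:ℝ) ^ (2 * s) * Real.Gamma ((N : ℝ) / 2 + s) /
    (Real.pi ^ ((N : ℝ) / 2) * |Real.Gamma (-s)|)

/-- `log⁻ t = max 0 (−log t)`. -/
def logNeg (t : ℝ) : ℝ := max 0 (-Real.log t)

/-- The one-dimensional kernel `k_Ω` for `Ω = (0,∞)`. -/
def k1 (s : ℝ) (x y : ℝ) : ℝ :=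
  cNs 1 s * ∫ z in Set.Iic (0:ℝ),
    (|x - z| ^ (1 + 2 * s) * |y - z| ^ (1 + 2 * s) *
      ∫ w in Set.Ioi (0:ℝ), |z - w| ^ (-(1:ℝ) - 2 * s))⁻¹

/-- The one-dimensional kernel `K_Ω = c_{1,s}|x-y|^{-1-2s} + k_Ω(x,y)` of the Neumann
problem for the fractional Laplacian on `Ω = (0,∞)`. -/
def neumannKer1 (s : ℝ) (x y : ℝ) : ℝ :=
  cNs 1 s * |x - y| ^ (-(1:ℝ) - 2 * s) + k1 s x y

/-- The kernel of the one-dimensional regional fractional Laplacian on `(0,∞)`. -/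
def regionalKer1 (s : ℝ) (x y : ℝ) : ℝ :=
  cNs 1 s * |x - y| ^ (-(1:ℝ) - 2 * s)

/-- `L_Ω u (x) = PV ∫_0^∞ (u(x)-u(y)) K(x,y) dy` exists and has value `l`. -/
def HasPV1 (K : ℝ → ℝ → ℝ) (u : ℝ → ℝ) (x l : ℝ) : Prop :=
  Filter.Tendsto
    (fun ε : ℝ => ∫ y in {y : ℝ | 0 < y ∧ ε < |x - y|}, (u x - u y) * K x y)
    (𝓝[>] (0:ℝ)) (𝓝 l)

/-- The bilinear form on `(0,∞) × (0,∞)` associated with a kernel. -/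
def BForm1 (K : ℝ → ℝ → ℝ) (u v : ℝ → ℝ) : ℝ :=
  ∫ x in Set.Ioi (0:ℝ), ∫ y in Set.Ioi (0:ℝ), (u x - u y) * (v x - v y) * K x y

/-- `α` is an admissible exponent of the one-dimensional boundary regularity theorem
(Theorem `Thm:BoundaryRegBH`) for the operator with kernel `K` on `(0,∞)`: every
solution `u` of `L u = f` on `(0,2R)` with `u(0) = 0`, `f ∈ L^∞`, and growth
`|u(y)| ≤ c₀ (1 + y^{2s-ε₀})` with `ε₀ > 1`, satisfies the corresponding interior-to-boundary
`C^α` estimate for `u(x)/x^{2s-1}`. -/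
def BoundaryRegExponent (s : ℝ) (K : ℝ → ℝ → ℝ) (α : ℝ) : Prop :=
  α ∈ Set.Ioo (0:ℝ) 1 ∧
    ∀ c₀ > (0:ℝ), ∀ ε₀ > (1:ℝ), ∃ C > (0:ℝ), ∀ R > (0:ℝ), ∀ u f : ℝ → ℝ,
      (∀ x ∈ Set.Ioo (0:ℝ) (2 * R), HasPV1 K u x (f x)) → u 0 = 0 →
      (∀ y > (0:ℝ), |u y| ≤ c₀ * (1 + y ^ (2 * s - ε₀))) →
      ∀ Mu Mf : ℝ, (∀ x ∈ Set.Ioo (0:ℝ) (2 * R), |u x| ≤ Mu) →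
        (∀ x ∈ Set.Ioo (0:ℝ) (2 * R), |f x| ≤ Mf) →
        ∀ x ∈ Set.Ioc (0:ℝ) R, ∀ y ∈ Set.Ioc (0:ℝ) R,
          |u x / x ^ (2 * s - 1) - u y / y ^ (2 * s - 1)| ≤
            C * R ^ (1 - 2 * s) * (|x - y| / R) ^ α * (Mu + R ^ (2 * s) * Mf)

end

lemma cNs_pos {s : ℝ} (hs : s ∈ Set.Ioo (1 / 2 : ℝ) 1) : 0 < cNs 1 s := by
  obtain ⟨h1, h2⟩ := hs
  unfold cNs
  have hG : Real.Gamma (-s) ≠ 0 := by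
    apply Real.Gamma_ne_zero
    intro m hm
    have : s = m := by linarith
    rcases m with _ | m
    · simp at this; linarith
    · push_cast at this
      have : (0:ℝ) ≤ m := Nat.cast_nonneg m
      linarith
  have : 0 < Real.Gamma (((1:ℕ):ℝ) / 2 + s) := Real.Gamma_pos_of_pos (by push_cast; linarith)
  have := Real.pi_pos
  positivity

lemma inner_int {s z : ℝ} (hs : 0 < s) (hz : z < 0) :
    ∫ w in Set.Ioi (0:ℝ), |z - w| ^ (-(1:ℝ) - 2 * s) = (-z) ^ (-(2 * s)) / (2 * s) := by
  have h := (measurePreserving_add_right (volume : Measure ℝ) (-z)).setIntegral_preimage_emb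
    (measurableEmbedding_addRight (-z)) (fun t => t ^ (-(1:ℝ) - 2 * s)) (Ioi (-z))
  rw [integral_Ioi_rpow_of_lt (by linarith) (by linarith)] at h
  have e : (fun x => x + -z) ⁻¹' Ioi (-z) = Ioi (0:ℝ) := by
    ext w; simp
  rw [e] at h
  rw [setIntegral_congr_fun (g := fun w => (w + -z) ^ (-(1:ℝ) - 2 * s)) measurableSet_Ioi, h]
  · have : -(1:ℝ) - 2 * s + 1 = -(2 * s) := by ring
    rw [this, neg_div_neg_eq]
  · intro w hw
    have hw : 0 < w := hw
    simp only
    rw [abs_of_neg (by linarith)]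
    congr 1; ring

/-- reduced kernel -/
noncomputable def gI (s x y t : ℝ) : ℝ := t ^ (2 * s) * (x + t) ^ (-(1:ℝ) - 2 * s) * (y + t) ^ (-(1:ℝ) - 2 * s)

/-- reduced kernel -/
noncomputable def J1 (s x y : ℝ) : ℝ := ∫ t in Ioi (0:ℝ), gI s x y t

lemma k1_eq {s x y : ℝ} (hs : 0 < s) (hx : 0 < x) (hy : 0 < y) :
    k1 s x y = cNs 1 s * (2 * s) * J1 s x y := by
  unfold k1 J1
  rw [mul_assoc]
  congr 1
  have := integral_comp_neg_Ioi 0 (fun z => (|x - z| ^ (1 + 2 * s) * |y - z| ^ (1 + 2 * s) *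
      ∫ w in Set.Ioi (0:ℝ), |z - w| ^ (-(1:ℝ) - 2 * s))⁻¹)
  rw [neg_zero] at this
  rw [← this, ← integral_const_mul]
  apply setIntegral_congr_fun measurableSet_Ioi
  intro t ht
  have ht : 0 < t := ht
  simp only
  rw [inner_int hs (by linarith), neg_neg, abs_of_pos (by linarith), abs_of_pos (by linarith)]
  unfold gI
  have e : -(1:ℝ) - 2 * s = -(1 + 2 * s) := by ring
  rw [e, Real.rpow_neg ht.le, Real.rpow_neg (by linarith), Real.rpow_neg (by linarith),
    sub_neg_eq_add, sub_neg_eq_add]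
  simp only [mul_inv, div_eq_mul_inv, inv_inv]
  ring

lemma gI_nonneg {s x y t : ℝ} (hx : 0 < x) (hy : 0 < y) (ht : 0 < t) : 0 ≤ gI s x y t := by
  unfold gI; positivity

lemma J1_nonneg {s x y : ℝ} (hx : 0 < x) (hy : 0 < y) : 0 ≤ J1 s x y :=
  setIntegral_nonneg measurableSet_Ioi fun _ ht => gI_nonneg hx hy ht

lemma J1_meas (s x : ℝ) : StronglyMeasurable (J1 s x) := by
  unfold J1
  apply StronglyMeasurable.integral_prod_right
  apply Measurable.stronglyMeasurable
  unfold gI Function.uncurry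
  fun_prop

lemma gI_le {s x y t : ℝ} (hs : 0 < s) (hx : 0 < x) (hy : 0 < y) (hyx : y ≤ x) (ht : 0 < t) :
    gI s x y t ≤ x ^ (-(1:ℝ) - 2 * s + 1 / 2) * (t + y) ^ (-(3:ℝ) / 2) := by
  have h1 : t ^ (2 * s) ≤ (y + t) ^ (2 * s) :=
    Real.rpow_le_rpow ht.le (by linarith) (by linarith)
  have h2 : (x + t) ^ (-(1:ℝ) - 2 * s) ≤ x ^ (-(1:ℝ) - 2 * s + 1 / 2) * (y + t) ^ (-(1:ℝ) / 2) := by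
    have : (-(1:ℝ) - 2 * s) = (-(1:ℝ) - 2 * s + 1 / 2) + (-(1:ℝ) / 2) := by ring
    rw [this, Real.rpow_add (by linarith)]
    rw [← this]
    apply mul_le_mul
    · exact Real.rpow_le_rpow_of_nonpos hx (by linarith) (by linarith)
    · exact Real.rpow_le_rpow_of_nonpos (by linarith) (by linarith) (by linarith)
    · positivity
    · positivity
  unfold gI
  calc _ ≤ (y + t) ^ (2 * s) * (x ^ (-(1:ℝ) - 2 * s + 1 / 2) * (y + t) ^ (-(1:ℝ) / 2)) *
        (y + t) ^ (-(1:ℝ) - 2 * s) := by gcongr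
    _ = x ^ (-(1:ℝ) - 2 * s + 1 / 2) * ((y + t) ^ (2 * s) * (y + t) ^ (-(1:ℝ) / 2) *
        (y + t) ^ (-(1:ℝ) - 2 * s)) := by ring
    _ = _ := by
      rw [← Real.rpow_add (by linarith), ← Real.rpow_add (by linarith), add_comm t y]
      congr 2; ring

lemma gI_meas (s x y : ℝ) : Measurable (gI s x y) := by
  unfold gI; fun_prop

lemma gI_int {s x y : ℝ} (hs : 0 < s) (hx : 0 < x) (hy : 0 < y) (hyx : y ≤ x) :
    IntegrableOn (gI s x y) (Ioi 0) := by
  refine Integrable.mono' ((integrableOn_add_rpow_Ioi_of_lt (a := -(3:ℝ)/2) (c := 0) (m := y)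
    (by norm_num) (by linarith)).const_mul (x ^ (-(1:ℝ) - 2 * s + 1 / 2)))
    (gI_meas s x y).aestronglyMeasurable ?_
  filter_upwards [ae_restrict_mem measurableSet_Ioi] with t ht
  rw [Real.norm_of_nonneg (gI_nonneg hx hy ht)]
  exact gI_le hs hx hy hyx ht

lemma J1_symm (s x y : ℝ) : J1 s x y = J1 s y x := by
  unfold J1 gI
  congr 1; ext t; ring

lemma J1_le {s x y : ℝ} (hs : 0 < s) (hx : 0 < x) (hy : 0 < y) (hyx : y ≤ x) :
    J1 s x y ≤ x ^ (-(1:ℝ) - 2 * s + 1 / 2) * (2 * y ^ (-(1:ℝ) / 2)) := by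
  have h := (measurePreserving_add_right (volume : Measure ℝ) y).setIntegral_preimage_emb
    (measurableEmbedding_addRight y) (fun t => t ^ (-(3:ℝ) / 2)) (Ioi y)
  rw [integral_Ioi_rpow_of_lt (by norm_num) (by linarith)] at h
  have e : (fun x => x + y) ⁻¹' Ioi y = Ioi (0:ℝ) := by
    ext w; simp
  rw [e] at h
  have h2 : 2 * y ^ (-(1:ℝ) / 2) = ∫ t in Ioi (0:ℝ), (t + y) ^ (-(3:ℝ) / 2) := by
    rw [h]; norm_num; ring
  rw [h2, ← integral_const_mul]
  apply setIntegral_mono_on (gI_int hs hx hy hyx) _ measurableSet_Ioi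
  · intro t ht; exact gI_le hs hx hy hyx ht
  · exact (integrableOn_add_rpow_Ioi_of_lt (a := -(3:ℝ)/2) (c := 0) (m := y)
    (by norm_num) (by linarith)).const_mul _

lemma J1_refl {s x y : ℝ} (hx : 0 < x) (hy : 0 < y) :
    J1 s x (x ^ 2 / y) = (y / x) ^ (1 + 2 * s) * J1 s x y := by
  have hb : 0 < x / y := by positivity
  have h := integral_comp_mul_left_Ioi' (gI s x (x^2/y)) 0 hb
  rw [mul_zero] at h
  unfold J1
  rw [← h, smul_eq_mul, ← integral_const_mul, ← integral_const_mul]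
  apply setIntegral_congr_fun measurableSet_Ioi
  intro t ht
  have ht : 0 < t := ht
  simp only [gI]
  have e1 : x + x / y * t = x / y * (y + t) := by field_simp
  have e2 : x ^ 2 / y + x / y * t = x / y * (x + t) := by field_simp
  rw [e1, e2, Real.mul_rpow hb.le ht.le, Real.mul_rpow hb.le (by linarith),
    Real.mul_rpow hb.le (by linarith)]
  have e3 : (y / x) ^ (1 + 2 * s) = (x / y) * (x / y) ^ (2 * s) * (x / y) ^ (-(1:ℝ) - 2 * s)
      * (x / y) ^ (-(1:ℝ) - 2 * s) := by
    rw [← inv_div x y, Real.inv_rpow hb.le, ← Real.rpow_neg hb.le]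
    nth_rewrite 2 [← Real.rpow_one (x / y)]
    rw [← Real.rpow_add hb, ← Real.rpow_add hb, ← Real.rpow_add hb]
    congr 1; ring
  rw [e3]; ring

lemma J1_ge {s x y r : ℝ} (hs : 0 < s) (hx : 0 < x) (hxr : x < r) (hy : r ≤ y) :
    (4:ℝ) ^ (-(1:ℝ) - 2 * s) * Real.log (r / x) * y ^ (-(1:ℝ) - 2 * s) ≤ J1 s x y := by
  have hint : IntegrableOn (gI s x y) (Ioi 0) := by
    have := gI_int hs (by linarith : 0 < y) hx (by linarith)
    refine this.congr_fun (fun t _ => ?_) measurableSet_Ioi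
    simp only [gI]; ring
  have h1 : ∫ t in Ioc x r, gI s x y t ≤ J1 s x y := by
    apply setIntegral_mono_set hint
    · filter_upwards [ae_restrict_mem measurableSet_Ioi] with t ht
      exact gI_nonneg hx (by linarith) ht
    · exact LE.le.eventuallyLE (fun t ht => lt_trans hx ht.1)
  refine le_trans ?_ h1
  have hl : Real.log (r / x) = ∫ t in Ioc x r, t⁻¹ := by
    rw [← intervalIntegral.integral_of_le hxr.le, integral_inv_of_pos hx (by linarith)]
  rw [hl, mul_right_comm, ← integral_const_mul]
  apply setIntegral_mono_on _ (hint.mono_set (fun t ht => lt_trans hx ht.1)) measurableSet_Ioc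
  · intro t ht
    have ht0 : 0 < t := lt_trans hx ht.1
    have hy0 : 0 < y := by linarith
    have a1 : (2 * t) ^ (-(1:ℝ) - 2 * s) ≤ (x + t) ^ (-(1:ℝ) - 2 * s) :=
      Real.rpow_le_rpow_of_nonpos (by linarith) (by linarith [ht.1]) (by linarith)
    have a2 : (2 * y) ^ (-(1:ℝ) - 2 * s) ≤ (y + t) ^ (-(1:ℝ) - 2 * s) :=
      Real.rpow_le_rpow_of_nonpos (by linarith) (by linarith [ht.2]) (by linarith)
    unfold gI
    calc _ = t ^ (2 * s) * (2 * t) ^ (-(1:ℝ) - 2 * s) * (2 * y) ^ (-(1:ℝ) - 2 * s) := by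
          rw [Real.mul_rpow (by norm_num) ht0.le, Real.mul_rpow (by norm_num) hy0.le,
            show (4:ℝ) = 2 * 2 by norm_num, Real.mul_rpow (by norm_num) (by norm_num)]
          have : t⁻¹ = t ^ (2 * s) * t ^ (-(1:ℝ) - 2 * s) := by
            rw [← Real.rpow_add ht0, ← Real.rpow_neg_one]; congr 1; ring
          rw [this]; ring
      _ ≤ _ := by gcongr
  · apply Integrable.const_mul
    have : IntervalIntegrable (fun t : ℝ => t⁻¹) volume x r := by
      apply intervalIntegrable_inv_iff.2
      right
      rw [uIcc_of_le hxr.le]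
      intro h; linarith [h.1]
    exact (intervalIntegrable_iff_integrableOn_Ioc_of_le hxr.le).1 this

structure GoodKer (s x : ℝ) (κ : ℝ → ℝ) : Prop where
  meas : AEStronglyMeasurable κ (volume.restrict (Ioi 0))
  refl : ∀ y > 0, κ (x ^ 2 / y) = (y / x) ^ (1 + 2 * s) * κ y
  nonneg : ∀ y > 0, 0 ≤ κ y
  bd : ∃ A, 0 ≤ A ∧ ∀ y, 0 < y → y < x →
    κ y ≤ A * ((x - y) ^ (-(1:ℝ) - 2 * s) * y ^ (-(1:ℝ) / 2))

lemma GoodKer.regional {s x : ℝ} (hs : s ∈ Set.Ioo (1 / 2 : ℝ) 1) (hx : 0 < x) :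
    GoodKer s x (regionalKer1 s x) where
  meas := by
    unfold regionalKer1
    apply Measurable.aestronglyMeasurable
    fun_prop
  refl := by
    intro y hy
    unfold regionalKer1
    have e1 : |x - x ^ 2 / y| = (y / x)⁻¹ * |x - y| := by
      rw [show x - x ^ 2 / y = (y / x)⁻¹ * (-(x - y)) by field_simp; ring, abs_mul, abs_neg,
        abs_of_pos (by positivity)]
    rw [e1, Real.mul_rpow (by positivity) (abs_nonneg _), Real.inv_rpow (by positivity),
      ← Real.rpow_neg (by positivity)]
    rw [show -(-(1:ℝ) - 2 * s) = 1 + 2 * s by ring]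
    ring
  nonneg := by
    intro y hy
    unfold regionalKer1
    have := cNs_pos hs
    positivity
  bd := by
    have := cNs_pos hs
    refine ⟨cNs 1 s * x ^ ((1:ℝ) / 2), by positivity, fun y hy hyx => ?_⟩
    unfold regionalKer1
    rw [abs_of_pos (by linarith)]
    have h1 : 1 ≤ x ^ ((1:ℝ) / 2) * y ^ (-(1:ℝ) / 2) := by
      rw [show -(1:ℝ) / 2 = -(1 / 2) by ring, Real.rpow_neg hy.le, ← div_eq_mul_inv,
        one_le_div (by positivity)]
      exact Real.rpow_le_rpow hy.le hyx.le (by norm_num)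
    have h0 : 0 < x - y := by linarith
    have h2 : 0 ≤ cNs 1 s * (x - y) ^ (-(1:ℝ) - 2 * s) := by positivity
    nlinarith [mul_le_mul_of_nonneg_left h1 h2]

lemma GoodKer.neumann {s x : ℝ} (hs : s ∈ Set.Ioo (1 / 2 : ℝ) 1) (hx : 0 < x) :
    GoodKer s x (neumannKer1 s x) := by
  have hc := cNs_pos hs
  have hs0 : 0 < s := by linarith [hs.1]
  have R := GoodKer.regional hs hx
  have e : ∀ y > 0, neumannKer1 s x y = regionalKer1 s x y + cNs 1 s * (2 * s) * J1 s x y := by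
    intro y hy
    unfold neumannKer1 regionalKer1
    rw [k1_eq hs0 hx hy]
  refine ⟨?_, ?_, ?_, ?_⟩
  · have : AEStronglyMeasurable (fun y => regionalKer1 s x y + cNs 1 s * (2 * s) * J1 s x y)
      (volume.restrict (Ioi 0)) :=
      R.meas.add ((J1_meas s x).aestronglyMeasurable.const_mul _)
    refine this.congr ?_
    filter_upwards [ae_restrict_mem measurableSet_Ioi] with y hy
    exact (e y hy).symm
  · intro y hy
    rw [e y hy, e _ (by positivity), R.refl y hy, J1_refl hx hy]; ring
  · intro y hy
    rw [e y hy]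
    have := R.nonneg y hy
    have := J1_nonneg (s := s) hx hy
    positivity
  · obtain ⟨A, hA, h⟩ := R.bd
    refine ⟨A + cNs 1 s * (2 * s) * (x ^ (-(1:ℝ) - 2 * s + 1 / 2) * 2 * x ^ (1 + 2 * s)),
      by positivity, fun y hy hyx => ?_⟩
    rw [e y hy, add_mul]
    apply add_le_add (h y hy hyx)
    have h0 : 0 < x - y := by linarith
    have h1 : 1 ≤ x ^ (1 + 2 * s) * (x - y) ^ (-(1:ℝ) - 2 * s) := by
      rw [show -(1:ℝ) - 2 * s = -(1 + 2 * s) by ring, Real.rpow_neg h0.le, ← div_eq_mul_inv,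
        one_le_div (by positivity)]
      exact Real.rpow_le_rpow h0.le (by linarith) (by linarith)
    have h2 := J1_le hs0 hx hy hyx.le
    calc _ ≤ cNs 1 s * (2 * s) * (x ^ (-(1:ℝ) - 2 * s + 1 / 2) * (2 * y ^ (-(1:ℝ) / 2))) := by
          gcongr
      _ ≤ cNs 1 s * (2 * s) * (x ^ (-(1:ℝ) - 2 * s + 1 / 2) * (2 * y ^ (-(1:ℝ) / 2))) *
          (x ^ (1 + 2 * s) * (x - y) ^ (-(1:ℝ) - 2 * s)) := by
          apply le_mul_of_one_le_right _ h1
          positivity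
      _ = _ := by ring

section Gen

variable {s x : ℝ} {κ : ℝ → ℝ}

lemma F_refl (hx : 0 < x) (hκ : GoodKer s x κ) {y : ℝ} (hy : 0 < y) :
    x ^ 2 / y ^ 2 * ((x ^ (2 * s - 1) - (x ^ 2 / y) ^ (2 * s - 1)) * κ (x ^ 2 / y)) =
      - ((x ^ (2 * s - 1) - y ^ (2 * s - 1)) * κ y) := by
  rw [hκ.refl y hy]
  have hb : 0 < y / x := by positivity
  have e1 : (x ^ 2 / y) = x * (y / x)⁻¹ := by field_simp
  have e2 : y ^ (2 * s - 1) = x ^ (2 * s - 1) * (y / x) ^ (2 * s - 1) := by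
    rw [← Real.mul_rpow hx.le hb.le]; congr 1; field_simp
  have e3 : (y / x) ^ (1 + 2 * s) = (y / x) ^ (2 * s - 1) * (y / x) ^ 2 := by
    rw [← Real.rpow_natCast (y / x) 2, ← Real.rpow_add hb]; congr 1; push_cast; ring
  have hp : 0 < (y / x) ^ (2 * s - 1) := by positivity
  rw [e1, e2, e3, Real.mul_rpow hx.le (by positivity), Real.inv_rpow hb.le]
  generalize (y / x) ^ (2 * s - 1) = q at *
  generalize x ^ (2 * s - 1) = p at *
  field_simp
  ring

lemma F_intOn (hs : s ∈ Set.Ioo (1 / 2 : ℝ) 1) (hx : 0 < x) (hκ : GoodKer s x κ) {b : ℝ}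
    (hbx : b < x) :
    IntegrableOn (fun y => (x ^ (2 * s - 1) - y ^ (2 * s - 1)) * κ y) (Ioo 0 b) := by
  obtain ⟨h1, h2⟩ := hs
  rcases le_or_gt b 0 with hb | hb
  · rw [Ioo_eq_empty (by linarith)]; exact integrableOn_empty
  obtain ⟨A, hA, h⟩ := hκ.bd
  have hI : IntegrableOn (fun y : ℝ => y ^ (-(1:ℝ) / 2)) (Ioo 0 b) :=
    (intervalIntegral.integrableOn_Ioo_rpow_iff hb).2 (by norm_num)
  refine Integrable.mono' (hI.const_mul (x ^ (2 * s - 1) * (A * (x - b) ^ (-(1:ℝ) - 2 * s)))) ?_ ?_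
  · apply AEStronglyMeasurable.mul
    · apply Measurable.aestronglyMeasurable; fun_prop
    · exact hκ.meas.mono_measure (Measure.restrict_mono (fun y hy => hy.1) le_rfl)
  · filter_upwards [ae_restrict_mem measurableSet_Ioo] with y hy
    have hy0 : 0 < y := hy.1
    have hyx : y < x := hy.2.trans hbx
    have hxb : 0 < x - b := by linarith
    have a1 : y ^ (2 * s - 1) ≤ x ^ (2 * s - 1) := Real.rpow_le_rpow hy0.le hyx.le (by linarith)
    have a2 : 0 ≤ y ^ (2 * s - 1) := by positivity
    have a3 : (x - y) ^ (-(1:ℝ) - 2 * s) ≤ (x - b) ^ (-(1:ℝ) - 2 * s) :=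
      Real.rpow_le_rpow_of_nonpos hxb (by linarith [hy.2]) (by linarith)
    have a4 := hκ.nonneg y hy0
    rw [Real.norm_of_nonneg (mul_nonneg (by linarith) a4)]
    calc _ ≤ x ^ (2 * s - 1) * (A * ((x - b) ^ (-(1:ℝ) - 2 * s) * y ^ (-(1:ℝ) / 2))) := by
          apply mul_le_mul (by linarith) _ a4 (by positivity)
          refine (h y hy0 hyx).trans ?_
          gcongr
      _ = _ := by ring

lemma image_inv {c : ℝ} (hx : 0 < x) (hc : 0 < c) :
    (fun w => x ^ 2 / w) '' (Ioo 0 (x ^ 2 / c)) = Ioi c := by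
  ext y
  simp only [mem_image, mem_Ioo, mem_Ioi]
  constructor
  · rintro ⟨w, ⟨h1, h2⟩, rfl⟩
    rw [lt_div_iff₀ hc] at h2
    rw [lt_div_iff₀ h1]; linarith
  · intro hy
    have hy0 : 0 < y := hc.trans hy
    refine ⟨x ^ 2 / y, ⟨by positivity, ?_⟩, by field_simp⟩
    gcongr

lemma F_far (hs : s ∈ Set.Ioo (1 / 2 : ℝ) 1) (hx : 0 < x) (hκ : GoodKer s x κ) {c : ℝ}
    (hc : x < c) :
    IntegrableOn (fun y => (x ^ (2 * s - 1) - y ^ (2 * s - 1)) * κ y) (Ioi c) ∧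
    ∫ y in Ioi c, (x ^ (2 * s - 1) - y ^ (2 * s - 1)) * κ y =
      - ∫ y in Ioo 0 (x ^ 2 / c), (x ^ (2 * s - 1) - y ^ (2 * s - 1)) * κ y := by
  have hc0 : 0 < c := hx.trans hc
  have hb : x ^ 2 / c < x := by rw [div_lt_iff₀ hc0]; nlinarith
  have hd : ∀ w ∈ Ioo 0 (x ^ 2 / c), HasDerivWithinAt (fun w => x ^ 2 / w) (- (x ^ 2 / w ^ 2))
      (Ioo 0 (x ^ 2 / c)) w := by
    intro w hw
    have := ((hasDerivAt_inv hw.1.ne').const_mul (x ^ 2)).hasDerivWithinAt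
      (s := Ioo 0 (x ^ 2 / c))
    simp only [← div_eq_mul_inv] at this
    have e : x ^ 2 * -(w ^ 2)⁻¹ = -(x ^ 2 / w ^ 2) := by ring
    exact e ▸ this
  have hinj : InjOn (fun w => x ^ 2 / w) (Ioo 0 (x ^ 2 / c)) := by
    intro a ha b hb h
    have h3 : a ≠ 0 := ha.1.ne'
    have h4 : b ≠ 0 := hb.1.ne'
    simp only at h
    field_simp at h
    exact h.symm
  have key : ∀ w ∈ Ioo 0 (x ^ 2 / c), |-(x ^ 2 / w ^ 2)| •
      ((x ^ (2 * s - 1) - (x ^ 2 / w) ^ (2 * s - 1)) * κ (x ^ 2 / w)) =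
      - ((x ^ (2 * s - 1) - w ^ (2 * s - 1)) * κ w) := by
    intro w hw
    rw [abs_neg, abs_of_nonneg (by positivity), smul_eq_mul, F_refl hx hκ hw.1]
  rw [← image_inv hx hc0]
  constructor
  · rw [integrableOn_image_iff_integrableOn_abs_deriv_smul measurableSet_Ioo hd hinj]
    refine IntegrableOn.congr_fun (F_intOn hs hx hκ hb).neg (fun w hw => ?_) measurableSet_Ioo
    exact (key w hw).symm
  · rw [integral_image_eq_integral_abs_deriv_smul measurableSet_Ioo hd hinj, ← integral_neg]
    exact setIntegral_congr_fun measurableSet_Ioo key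

lemma set_split {ε : ℝ} (hx : 0 < x) (hε : 0 < ε) :
    {y : ℝ | 0 < y ∧ ε < |x - y|} = Ioo 0 (x - ε) ∪ Ioi (x + ε) := by
  ext y
  simp only [mem_ofPred_eq, mem_union, mem_Ioo, mem_Ioi, lt_abs]
  constructor
  · rintro ⟨h, h1 | h1⟩
    · left; constructor <;> linarith
    · right; linarith
  · rintro (⟨h, h1⟩ | h1)
    · exact ⟨h, Or.inl (by linarith)⟩
    · exact ⟨by linarith, Or.inr (by linarith)⟩

lemma F_intS (hs : s ∈ Set.Ioo (1 / 2 : ℝ) 1) (hx : 0 < x) (hκ : GoodKer s x κ) {ε : ℝ}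
    (hε : 0 < ε) :
    IntegrableOn (fun y => (x ^ (2 * s - 1) - y ^ (2 * s - 1)) * κ y)
      {y : ℝ | 0 < y ∧ ε < |x - y|} := by
  rw [set_split hx hε]
  exact (F_intOn hs hx hκ (by linarith)).union (F_far hs hx hκ (by linarith)).1

lemma F_eq (hs : s ∈ Set.Ioo (1 / 2 : ℝ) 1) (hx : 0 < x) (hκ : GoodKer s x κ) {ε : ℝ}
    (hε : 0 < ε) (hεx : ε < x) :
    ∫ y in {y : ℝ | 0 < y ∧ ε < |x - y|}, (x ^ (2 * s - 1) - y ^ (2 * s - 1)) * κ y =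
     - ∫ y in Ico (x - ε) (x ^ 2 / (x + ε)), (x ^ (2 * s - 1) - y ^ (2 * s - 1)) * κ y := by
  have hb : x ^ 2 / (x + ε) < x := by rw [div_lt_iff₀ (by linarith)]; nlinarith
  have hb2 : x - ε ≤ x ^ 2 / (x + ε) := by rw [le_div_iff₀ (by linarith)]; nlinarith
  have hI := F_intOn hs hx hκ hb
  rw [set_split hx hε, setIntegral_union _ measurableSet_Ioi (F_intOn hs hx hκ (by linarith))
    (F_far hs hx hκ (by linarith)).1, (F_far hs hx hκ (by linarith)).2]
  · have hu : Ioo 0 (x ^ 2 / (x + ε)) = Ioo 0 (x - ε) ∪ Ico (x - ε) (x ^ 2 / (x + ε)) :=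
      (Ioo_union_Ico_eq_Ioo (by linarith) hb2).symm
    rw [hu] at hI
    rw [hu, setIntegral_union _ measurableSet_Ico hI.left_of_union hI.right_of_union]
    · ring
    · rw [Set.disjoint_left]; rintro y ⟨_, h1⟩ ⟨h2, _⟩; linarith
  · rw [Set.disjoint_left]; rintro y ⟨_, h1⟩ h2; have h2 : x + ε < y := h2; linarith

lemma F_tendsto (hs : s ∈ Set.Ioo (1 / 2 : ℝ) 1) (hx : 0 < x) (hκ : GoodKer s x κ) :
    Tendsto (fun ε => ∫ y in {y : ℝ | 0 < y ∧ ε < |x - y|},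
      (x ^ (2 * s - 1) - y ^ (2 * s - 1)) * κ y) (𝓝[>] (0:ℝ)) (𝓝 0) := by
  obtain ⟨A, hA, h⟩ := hκ.bd
  set M : ℝ := x ^ (2 * s - 2) * (A * ((1 / 2 : ℝ) ^ (-(2 * s)) * (x / 2) ^ (-(1:ℝ) / 2))) / x
    with hM
  have hlim : Tendsto (fun ε : ℝ => M * ε ^ (2 - 2 * s)) (𝓝[>] (0:ℝ)) (𝓝 0) := by
    have : Tendsto (fun ε : ℝ => M * ε ^ (2 - 2 * s)) (𝓝 (0:ℝ)) (𝓝 (M * 0 ^ (2 - 2 * s))) :=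
      (Real.continuousAt_rpow_const 0 _ (Or.inr (by linarith [hs.2]))).tendsto.const_mul M
    rw [Real.zero_rpow (by linarith [hs.2]), mul_zero] at this
    exact this.mono_left nhdsWithin_le_nhds
  refine squeeze_zero_norm' ?_ hlim
  have hev : Ioo 0 (x / 2) ∈ 𝓝[>] (0:ℝ) := Ioo_mem_nhdsGT (by linarith)
  filter_upwards [hev] with ε hε
  obtain ⟨hε, hεx⟩ := hε
  rw [F_eq hs hx hκ hε (by linarith), norm_neg]
  have hb2 : x - ε ≤ x ^ 2 / (x + ε) := by rw [le_div_iff₀ (by linarith)]; nlinarith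
  have hlen : x ^ 2 / (x + ε) - (x - ε) ≤ ε ^ 2 / x := by
    have : x ^ 2 / (x + ε) - (x - ε) = ε ^ 2 / (x + ε) := by field_simp; ring
    rw [this]; gcongr; linarith
  have hupp : x ^ 2 / (x + ε) ≤ x - ε / 2 := by
    rw [div_le_iff₀ (by linarith)]; nlinarith
  set C : ℝ := x ^ (2 * s - 2) * (A * ((ε * (1 / 2 : ℝ)) ^ (-(2 * s)) * (x / 2) ^ (-(1:ℝ) / 2)))
    with hC
  have hC0 : 0 ≤ C := by positivity
  have hbound : ∀ y ∈ Ico (x - ε) (x ^ 2 / (x + ε)),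
      ‖(x ^ (2 * s - 1) - y ^ (2 * s - 1)) * κ y‖ ≤ C := by
    intro y hy
    have hy0 : 0 < y := by linarith [hy.1]
    have hyx : ε / 2 < x - y := by linarith [hy.2]
    have hxy : 0 < x - y := by linarith
    have a1 : y ^ (2 * s - 1) ≤ x ^ (2 * s - 1) :=
      Real.rpow_le_rpow hy0.le (by linarith) (by linarith [hs.1])
    have a4 := hκ.nonneg y hy0
    rw [Real.norm_of_nonneg (mul_nonneg (by linarith) a4)]
    have a5 : x ^ (2 * s - 1) - y ^ (2 * s - 1) ≤ x ^ (2 * s - 2) * (x - y) := by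
      have b1 : y / x ≤ (y / x) ^ (2 * s - 1) := by
        apply Real.self_le_rpow_of_le_one (by positivity) _ (by linarith [hs.2])
        rw [div_le_one hx]; linarith
      have b2 : y ^ (2 * s - 1) = x ^ (2 * s - 1) * (y / x) ^ (2 * s - 1) := by
        rw [← Real.mul_rpow hx.le (by positivity)]; congr 1; field_simp
      have b3 : x ^ (2 * s - 2) = x ^ (2 * s - 1) / x := by
        rw [← Real.rpow_sub_one hx.ne']; congr 1; ring
      have b4 : 0 < x ^ (2 * s - 1) := by positivity
      rw [b2, b3]
      calc _ ≤ x ^ (2 * s - 1) - x ^ (2 * s - 1) * (y / x) := by gcongr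
        _ = _ := by field_simp
    calc _ ≤ (x ^ (2 * s - 2) * (x - y)) *
            (A * ((x - y) ^ (-(1:ℝ) - 2 * s) * y ^ (-(1:ℝ) / 2))) := by
          apply mul_le_mul a5 (h y hy0 (by linarith)) a4 (by positivity)
      _ = x ^ (2 * s - 2) * (A * ((x - y) ^ (-(2 * s)) * y ^ (-(1:ℝ) / 2))) := by
          have : (x - y) ^ (-(2 * s)) = (x - y) * (x - y) ^ (-(1:ℝ) - 2 * s) := by
            rw [show -(1:ℝ) - 2 * s = -(2 * s) - 1 by ring, Real.rpow_sub_one hxy.ne']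
            field_simp
          rw [this]; ring
      _ ≤ C := by
          have c1 : (x - y) ^ (-(2 * s)) ≤ (ε * (1 / 2)) ^ (-(2 * s)) :=
            Real.rpow_le_rpow_of_nonpos (by linarith) (by linarith) (by linarith [hs.1])
          have c2 : y ^ (-(1:ℝ) / 2) ≤ (x / 2) ^ (-(1:ℝ) / 2) :=
            Real.rpow_le_rpow_of_nonpos (by linarith) (by linarith [hy.1]) (by norm_num)
          rw [hC]
          gcongr
  have := norm_setIntegral_le_of_norm_le_const (μ := volume) (by simp) hbound
  refine this.trans ?_
  rw [Real.volume_real_Ico_of_le hb2]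
  calc _ ≤ C * (ε ^ 2 / x) := by gcongr
    _ = _ := by
      have : ε ^ (2 - 2 * s) = ε ^ (-(2 * s)) * ε ^ 2 := by
        rw [← Real.rpow_natCast ε 2, ← Real.rpow_add hε]; congr 1; push_cast; ring
      rw [hC, hM, this, Real.mul_rpow hε.le (by norm_num)]; ring

lemma G_int (hs : s ∈ Set.Ioo (1 / 2 : ℝ) 1) (hx : 0 < x) (hκ : GoodKer s x κ) {r : ℝ}
    (hxr : x < r) {η : ℝ → ℝ} (hη : Continuous η) (h01 : ∀ x, 0 ≤ η x ∧ η x ≤ 1)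
    (h1 : ∀ x ∈ Set.Icc (0:ℝ) r, η x = 1) :
    IntegrableOn (fun y => (1 - η y) * y ^ (2 * s - 1) * κ y) (Ioi 0) := by
  have hr : 0 < r := hx.trans hxr
  obtain ⟨A, hA, h⟩ := hκ.bd
  have hmeas : AEStronglyMeasurable (fun y => (1 - η y) * y ^ (2 * s - 1) * κ y)
      (volume.restrict (Ioi 0)) := by
    apply AEStronglyMeasurable.mul _ hκ.meas
    apply Measurable.aestronglyMeasurable
    have := hη.measurable
    fun_prop
  rw [← Ioc_union_Ioi_eq_Ioi hr.le]
  apply IntegrableOn.union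
  · refine IntegrableOn.congr_fun (f := fun _ => (0:ℝ)) integrableOn_zero ?_ measurableSet_Ioc
    intro y hy
    simp [h1 y ⟨hy.1.le, hy.2⟩]
  · set d := x - x ^ 2 / r with hd
    have hd0 : 0 < d := by
      rw [hd, sub_pos, div_lt_iff₀ hr]; nlinarith
    have hI := (integrableOn_Ioi_rpow_of_lt (a := -(3:ℝ) / 2) (by norm_num) hr).const_mul
      (x ^ (1 + 2 * s) * A * d ^ (-(1:ℝ) - 2 * s) * (x ^ 2) ^ (-(1:ℝ) / 2))
    refine Integrable.mono' hI
      (hmeas.mono_measure (Measure.restrict_mono (Ioi_subset_Ioi hr.le) le_rfl)) ?_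
    filter_upwards [ae_restrict_mem measurableSet_Ioi] with y hy
    have hy : r < y := hy
    have hy0 : 0 < y := hr.trans hy
    have hx2 : 0 < x ^ 2 / y := by positivity
    have a1 : x ^ 2 / y < x := by rw [div_lt_iff₀ hy0]; nlinarith
    have a2 : κ y = (y / x) ^ (-(1:ℝ) - 2 * s) * κ (x ^ 2 / y) := by
      rw [hκ.refl y hy0, ← mul_assoc, ← Real.rpow_add (by positivity)]
      ring_nf; simp
    have a3 := h _ hx2 a1
    have a4 : d ≤ x - x ^ 2 / y := by
      rw [hd]; gcongr
    have a5 : (x - x ^ 2 / y) ^ (-(1:ℝ) - 2 * s) ≤ d ^ (-(1:ℝ) - 2 * s) :=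
      Real.rpow_le_rpow_of_nonpos hd0 a4 (by linarith [hs.1])
    have a6 := hκ.nonneg y hy0
    obtain ⟨b0, b1⟩ := h01 y
    have hp : 0 < y ^ (2 * s - 1) := by positivity
    rw [Real.norm_of_nonneg (mul_nonneg (mul_nonneg (by linarith) hp.le) a6)]
    have a7 : κ y ≤ (y / x) ^ (-(1:ℝ) - 2 * s) * (A * (d ^ (-(1:ℝ) - 2 * s) *
        (x ^ 2 / y) ^ (-(1:ℝ) / 2))) := by
      rw [a2]; gcongr
      exact a3.trans (by gcongr)
    calc _ ≤ 1 * y ^ (2 * s - 1) * ((y / x) ^ (-(1:ℝ) - 2 * s) * (A * (d ^ (-(1:ℝ) - 2 * s) *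
        (x ^ 2 / y) ^ (-(1:ℝ) / 2)))) := by
          apply mul_le_mul _ a7 a6 (by positivity)
          gcongr; linarith
      _ = _ := by
        have e1 : (y / x) ^ (-(1:ℝ) - 2 * s) = y ^ (-(1:ℝ) - 2 * s) * x ^ (1 + 2 * s) := by
          rw [Real.div_rpow hy0.le hx.le, div_eq_mul_inv, ← Real.rpow_neg hx.le]
          congr 2; ring
        have e2 : (x ^ 2 / y) ^ (-(1:ℝ) / 2) = (x ^ 2) ^ (-(1:ℝ) / 2) * y ^ ((1:ℝ) / 2) := by
          rw [Real.div_rpow (by positivity) hy0.le, div_eq_mul_inv, ← Real.rpow_neg hy0.le]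
          congr 2; ring
        have e3 : y ^ (-(3:ℝ) / 2) = y ^ (2 * s - 1) * y ^ (-(1:ℝ) - 2 * s) * y ^ ((1:ℝ) / 2) := by
          rw [← Real.rpow_add hy0, ← Real.rpow_add hy0]; congr 1; ring
        rw [e1, e2, e3]; ring

lemma main_gen (hs : s ∈ Set.Ioo (1 / 2 : ℝ) 1) (hx : 0 < x) {K : ℝ → ℝ → ℝ}
    (hκ : GoodKer s x (K x)) {r : ℝ}
    (hxr : x < r) {η : ℝ → ℝ} (hη : Continuous η) (h01 : ∀ x, 0 ≤ η x ∧ η x ≤ 1)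
    (h1 : ∀ x ∈ Set.Icc (0:ℝ) r, η x = 1) (h2 : ∀ x : ℝ, 2 * r ≤ x → η x = 0) :
    ∃ l, HasPV1 K (fun t => η t * t ^ (2 * s - 1)) x l ∧
      ∀ m, (∀ y, 2 * r ≤ y → m * y ^ (-(1:ℝ) - 2 * s) ≤ K x y) → m / (2 * r) ≤ l := by
  have hr : 0 < r := hx.trans hxr
  have hG := G_int hs hx hκ hxr hη h01 h1
  refine ⟨∫ y in Ioi 0, (1 - η y) * y ^ (2 * s - 1) * K x y, ?_, ?_⟩
  · have hF := (F_tendsto hs hx hκ).add_const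
      (∫ y in Ioi 0, (1 - η y) * y ^ (2 * s - 1) * K x y)
    rw [zero_add] at hF
    refine hF.congr' ?_
    have hev : Ioo 0 (r - x) ∈ 𝓝[>] (0:ℝ) := Ioo_mem_nhdsGT (by linarith)
    filter_upwards [hev] with ε hε
    have hsub : {y : ℝ | 0 < y ∧ ε < |x - y|} ⊆ Ioi 0 := fun y hy => hy.1
    have hms : MeasurableSet {y : ℝ | 0 < y ∧ ε < |x - y|} := by
      rw [set_split hx hε.1]; exact measurableSet_Ioo.union measurableSet_Ioi
    have hGe : ∫ y in Ioi 0, (1 - η y) * y ^ (2 * s - 1) * K x y =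
        ∫ y in {y : ℝ | 0 < y ∧ ε < |x - y|}, (1 - η y) * y ^ (2 * s - 1) * K x y := by
      apply setIntegral_eq_of_subset_of_forall_sdiff_eq_zero measurableSet_Ioi hsub
      rintro y ⟨hy0, hy⟩
      have hy0 : 0 < y := hy0
      have : |x - y| ≤ ε := by
        by_contra hc
        exact hy ⟨hy0, not_le.1 hc⟩
      have := (abs_le.1 this).1
      rw [h1 y ⟨hy0.le, by linarith [hε.2]⟩]; simp
    rw [hGe, ← integral_add (F_intS hs hx hκ hε.1) (hG.mono_set hsub)]
    apply setIntegral_congr_fun hms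
    intro y hy
    simp only
    rw [h1 x ⟨hx.le, hxr.le⟩]; ring
  · intro m hm
    have e : m / (2 * r) = ∫ y in Ioi (2 * r), m * y ^ (-(2:ℝ)) := by
      rw [integral_const_mul, integral_Ioi_rpow_of_lt (by norm_num) (by linarith)]
      rw [show (-2:ℝ) + 1 = -1 by norm_num, Real.rpow_neg_one]
      field_simp
    have hsub : Ioi (2 * r) ⊆ Ioi 0 := Ioi_subset_Ioi (by linarith)
    calc _ ≤ ∫ y in Ioi (2 * r), (1 - η y) * y ^ (2 * s - 1) * K x y := by
          rw [e]
          apply setIntegral_mono_on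
            ((integrableOn_Ioi_rpow_of_lt (by norm_num) (by linarith)).const_mul m)
            (hG.mono_set hsub) measurableSet_Ioi
          intro y hy
          have hy : 2 * r < y := hy
          have hy0 : 0 < y := by linarith
          rw [h2 y hy.le, sub_zero, one_mul]
          calc _ = y ^ (2 * s - 1) * (m * y ^ (-(1:ℝ) - 2 * s)) := by
                rw [mul_left_comm, ← Real.rpow_add hy0]; congr 2; ring
            _ ≤ _ := by
                have := hm y hy.le
                gcongr
      _ ≤ _ := by
          apply setIntegral_mono_set hG
          · filter_upwards [ae_restrict_mem measurableSet_Ioi] with y hy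
            have hy : 0 < y := hy
            have := hκ.nonneg y hy
            have h3 : 0 ≤ 1 - η y := by linarith [(h01 y).2]
            show 0 ≤ (1 - η y) * y ^ (2 * s - 1) * K x y
            positivity
          · exact LE.le.eventuallyLE hsub

lemma regional_ge (hs : s ∈ Set.Ioo (1 / 2 : ℝ) 1) (hx : 0 < x) {r y : ℝ} (hxr : x < r)
    (hy : 2 * r ≤ y) : cNs 1 s * y ^ (-(1:ℝ) - 2 * s) ≤ regionalKer1 s x y := by
  have := cNs_pos hs
  unfold regionalKer1
  rw [abs_of_neg (by linarith)]
  gcongr cNs 1 s * ?_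
  exact Real.rpow_le_rpow_of_nonpos (by linarith) (by linarith) (by linarith [hs.1])

end Gen

noncomputable section

/-- **1D supersolution** (Lemma 5.2): `φ̄(x) = η(x) x^{2s-1}` satisfies
`L_Ω φ̄ ≥ c̄` in `(0,r₀)`, with the logarithmic improvement
`L_Ω φ̄ ≥ c̄ (1 + log⁻(x/r₀))` for the Neumann kernel. -/
theorem one_dim_supersolution
    (s r₀ : ℝ) (hs : s ∈ Set.Ioo (1 / 2 : ℝ) 1) (hr₀ : 0 < r₀)
    (K : ℝ → ℝ → ℝ) (hK : K = neumannKer1 s ∨ K = regionalKer1 s) :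
    ∃ c > (0:ℝ), ∀ η : ℝ → ℝ, ContDiff ℝ (⊤ : ℕ∞) η →
      (∀ x, 0 ≤ η x ∧ η x ≤ 1) → (∀ x ∈ Set.Icc (0:ℝ) r₀, η x = 1) →
      (∀ x : ℝ, 2 * r₀ ≤ x → η x = 0) →
      ∀ x ∈ Set.Ioo (0:ℝ) r₀, ∃ l : ℝ,
        HasPV1 K (fun t => η t * t ^ (2 * s - 1)) x l ∧ c ≤ l ∧
        (K = neumannKer1 s → c * (1 + logNeg (x / r₀)) ≤ l) := by
  have hc := cNs_pos hs
  have hs0 : 0 < s := by linarith [hs.1]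
  by_cases hN : K = neumannKer1 s
  · set q : ℝ := min 1 (2 * s * (4:ℝ) ^ (-(1:ℝ) - 2 * s)) with hq
    have hq0 : 0 < q := lt_min one_pos (by positivity)
    refine ⟨cNs 1 s * q / (2 * r₀), by positivity, ?_⟩
    intro η hη h01 h1 h2 x hx
    have hg : GoodKer s x (K x) := by rw [hN]; exact GoodKer.neumann hs hx.1
    obtain ⟨l, hl, hm⟩ := main_gen hs hx.1 hg hx.2 hη.continuous h01 h1 h2
    have hlog : logNeg (x / r₀) = Real.log (r₀ / x) := by
      have : 0 ≤ Real.log (r₀ / x) := Real.log_nonneg (by rw [one_le_div hx.1]; exact hx.2.le)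
      unfold logNeg
      rw [← Real.log_inv, inv_div, max_eq_right this]
    have hlog0 : 0 ≤ logNeg (x / r₀) := le_max_left _ _
    have key : cNs 1 s * q / (2 * r₀) * (1 + logNeg (x / r₀)) ≤ l := by
      have := hm (cNs 1 s * q * (1 + logNeg (x / r₀))) ?_
      · refine le_trans (le_of_eq ?_) this
        ring
      · intro y hy
        have hy0 : 0 < y := by linarith
        have b1 := regional_ge hs hx.1 hx.2 hy
        have b2 := J1_ge hs0 hx.1 hx.2 (by linarith : r₀ ≤ y)
        have e : K x y = regionalKer1 s x y + cNs 1 s * (2 * s) * J1 s x y := by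
          rw [hN]; unfold neumannKer1 regionalKer1
          rw [k1_eq hs0 hx.1 hy0]
        rw [e]
        rw [← hlog] at b2
        have q1 : q ≤ 1 := min_le_left _ _
        have q2 : q ≤ 2 * s * (4:ℝ) ^ (-(1:ℝ) - 2 * s) := min_le_right _ _
        calc _ = cNs 1 s * (q * y ^ (-(1:ℝ) - 2 * s)) +
              cNs 1 s * (q * (logNeg (x / r₀) * y ^ (-(1:ℝ) - 2 * s))) := by ring
          _ ≤ cNs 1 s * (1 * y ^ (-(1:ℝ) - 2 * s)) +
              cNs 1 s * ((2 * s * (4:ℝ) ^ (-(1:ℝ) - 2 * s)) *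
                (logNeg (x / r₀) * y ^ (-(1:ℝ) - 2 * s))) := by gcongr
          _ = cNs 1 s * y ^ (-(1:ℝ) - 2 * s) + cNs 1 s * (2 * s) *
              ((4:ℝ) ^ (-(1:ℝ) - 2 * s) * logNeg (x / r₀) * y ^ (-(1:ℝ) - 2 * s)) := by ring
          _ ≤ _ := by gcongr
    refine ⟨l, hl, ?_, fun _ => key⟩
    refine le_trans ?_ key
    apply le_mul_of_one_le_right (by positivity) (by linarith)
  · have hR := hK.resolve_left hN
    refine ⟨cNs 1 s / (2 * r₀), by positivity, ?_⟩
    intro η hη h01 h1 h2 x hx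
    have hg : GoodKer s x (K x) := by rw [hR]; exact GoodKer.regional hs hx.1
    obtain ⟨l, hl, hm⟩ := main_gen hs hx.1 hg hx.2 hη.continuous h01 h1 h2
    refine ⟨l, hl, ?_, fun h => absurd h hN⟩
    apply hm
    intro y hy
    rw [hR]
    exact regional_ge hs hx.1 hx.2 hy

end
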